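/- (Desai–Roy bound on the smallest eigenvalue.) Let G be a D-regular simple graph on N vertices with D ≥ 1, and let λ₁ ≥ λ₂ ≥ … ≥ λ_N be the eigenvalues of its adjacency matrix. For a nonempty vertex subset U, let b(U) be the minimum number of edges that must be removed from the induced subgraph G[U] to make it bipartite, and let e(U, Uᶜ) be the number of edges with exactly one endpoint in U. Set Ψ = min over all nonempty U ⊆ V(G) of (b(U) + e(U, Uᶜ))/|U|. Then λ_N ≥ −D + Ψ²/(4D). -/

import Mathlib

open scoped Matrix

/-- The Euclidean (ℓ²) norm of a finitely-supported real vector. -/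
noncomputable def l2norm {α : Type*} [Fintype α] (v : α → ℝ) : ℝ :=
  Real.sqrt (∑ x, v x ^ 2)

open Classical in
/-- The (real) adjacency matrix of a graph. -/
noncomputable def adjMat {α : Type*} [Fintype α] (G : SimpleGraph α) : Matrix α α ℝ :=
  fun x y => if G.Adj x y then 1 else 0

/-- For a regular graph, `λ(G) ≤ lam` (all eigenvalues other than the largest are
at most `lam` in absolute value) is equivalent to the adjacency operator contracting
by a factor `lam` on the space of mean-zero vectors. -/
def eigBound {α : Type*} [Fintype α] (G : SimpleGraph α) (lam : ℝ) : Prop :=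
  ∀ v : α → ℝ, (∑ x, v x) = 0 → l2norm (adjMat G *ᵥ v) ≤ lam * l2norm v

lemma adjMat_isHermitian {α : Type*} [Fintype α] (G : SimpleGraph α) :
    (adjMat G).IsHermitian := by
  unfold Matrix.IsHermitian
  ext x y
  by_cases h : G.Adj x y
  · simp [adjMat, Matrix.conjTranspose_apply, h, h.symm]
  · have h' : ¬ G.Adj y x := fun hyx => h hyx.symm
    simp [adjMat, Matrix.conjTranspose_apply, h, h']

open Classical in
/-- The number of edges of `G` with one endpoint in `U` and the other in `Uᶜ`. -/
noncomputable def cutCount {α : Type*} [Fintype α] [DecidableEq α]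
    (G : SimpleGraph α) (U : Finset α) : ℕ :=
  ∑ x ∈ U, ∑ y ∈ Uᶜ, if G.Adj x y then 1 else 0

/-- `H` can be made bipartite by removing `k` of its edges. -/
def bipartiteAfter {β : Type*} (H : SimpleGraph β) (k : ℕ) : Prop :=
  ∃ Del : Set (Sym2 β), Del ⊆ H.edgeSet ∧ Del.ncard = k ∧ (H.deleteEdges Del).Colorable 2

/-!
Let `x` be an eigenvector with eigenvalue `l`, colour each vertex by the sign of its `x`-value, and
consider the sets `U t = {u | t < x u ^ 2}`. Deleting the monochromatic edges inside `U t` makes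
`G[U t]` bipartite, so their number plus the size of the cut around `U t` is at least `Ψ * |U t|`.
Integrating over `t`, an edge `uv` contributes at most `|x u + x v| * (|x u| + |x v|)`, and the
Cauchy-Schwarz inequality separates the two factors. The first one gives the quadratic form
`∑ (x u + x v) ^ 2` over the edges, which is at most `(D + l) * ∑ x u ^ 2`.
-/

section Superlevel

open MeasureTheory Set

variable {ι : Type*}

theorem sum_filter_lt_eq_sum_indicator (s : Finset ι) (c a : ι → ℝ) (t : ℝ) :
    ∑ i ∈ s with t < a i, c i = ∑ i ∈ s, (Iio (a i)).indicator (fun _ ↦ c i) t := by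
  simp only [Finset.sum_filter, indicator_apply, mem_Iio]

theorem integrableOn_Ioi_indicator_Iio (c a : ℝ) :
    IntegrableOn ((Iio a).indicator fun _ ↦ c) (Ioi 0) := by
  rw [IntegrableOn, integrable_indicator_iff measurableSet_Iio, IntegrableOn,
    Measure.restrict_restrict measurableSet_Iio, Iio_inter_Ioi]
  exact integrableOn_const measure_Ioo_lt_top.ne

theorem setIntegral_Ioi_indicator_Iio (c : ℝ) {a : ℝ} (ha : 0 ≤ a) :
    ∫ t in Ioi 0, (Iio a).indicator (fun _ ↦ c) t = c * a := by
  rw [setIntegral_indicator measurableSet_Iio, Ioi_inter_Iio, setIntegral_const,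
    Real.volume_real_Ioo_of_le ha, sub_zero, smul_eq_mul, mul_comm]

theorem integrableOn_sum_filter_lt (s : Finset ι) (c a : ι → ℝ) :
    IntegrableOn (fun t ↦ ∑ i ∈ s with t < a i, c i) (Ioi 0) := by
  simp only [sum_filter_lt_eq_sum_indicator]
  exact integrable_finsetSum s fun i _ ↦ integrableOn_Ioi_indicator_Iio (c i) (a i)

theorem setIntegral_sum_filter_lt (s : Finset ι) (c : ι → ℝ) {a : ι → ℝ}
    (ha : ∀ i ∈ s, 0 ≤ a i) :
    ∫ t in Ioi 0, ∑ i ∈ s with t < a i, c i = ∑ i ∈ s, c i * a i := by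
  simp only [sum_filter_lt_eq_sum_indicator]
  rw [integral_finsetSum s fun i _ ↦ integrableOn_Ioi_indicator_Iio (c i) (a i)]
  exact Finset.sum_congr rfl fun i hi ↦ setIntegral_Ioi_indicator_Iio (c i) (ha i hi)

theorem sum_mul_le_sum_sum_mul_min [Fintype ι] {p : ι → ℝ} {B : ι → ι → ℝ}
    (h : ∀ U : Finset ι, ∑ u ∈ U, p u ≤ ∑ u ∈ U, ∑ v ∈ U, B u v)
    {a : ι → ℝ} (ha : ∀ u, 0 ≤ a u) :
    ∑ u, p u * a u ≤ ∑ u, ∑ v, B u v * min (a u) (a v) := by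
  rw [← Fintype.sum_prod_type' fun u v ↦ B u v * min (a u) (a v),
    ← setIntegral_sum_filter_lt _ _ fun u _ ↦ ha u,
    ← setIntegral_sum_filter_lt Finset.univ (fun q : ι × ι ↦ B q.1 q.2)
      fun q _ ↦ le_min (ha q.1) (ha q.2)]
  refine integral_mono (integrableOn_sum_filter_lt _ _ _) (integrableOn_sum_filter_lt _ _ _)
    fun t ↦ (h {u | t < a u}).trans_eq ?_
  rw [← Finset.sum_product']
  refine Finset.sum_congr ?_ fun _ _ ↦ rfl
  ext q
  simp

end Superlevel

section Weighted

variable {α : Type*} [Fintype α] {A : Matrix α α ℝ} {c : α → Bool} {x : α → ℝ} {Ψ D l : ℝ}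

/-- In a graph with symmetric edge weights `A`, the total weight of the edges that have to be
deleted in order to cut `U` off from its complement and to make `c` a proper colouring of `U`.
Every monochromatic edge inside `U` occurs in both orders in the first sum, hence the factor
`1 / 2`. -/
noncomputable def bipartitionDefect [DecidableEq α] (A : Matrix α α ℝ) (c : α → Bool)
    (U : Finset α) : ℝ :=
  (∑ u ∈ U, ∑ v ∈ U, if c u = c v then A u v else 0) / 2 + ∑ u ∈ U, ∑ v ∈ Uᶜ, A u v

theorem mul_sum_le_of_mul_card_le_bipartitionDefect [DecidableEq α]
    (h : ∀ U : Finset α, Ψ * U.card ≤ bipartitionDefect A c U)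
    {a : α → ℝ} (ha : ∀ u, 0 ≤ a u) :
    Ψ * ∑ u, a u ≤ ∑ u, ∑ v,
      A u v * ((if c u = c v then min (a u) (a v) else 0) / 2 + (a u - min (a u) (a v))) := by
  have superlevel := sum_mul_le_sum_sum_mul_min (p := fun u ↦ Ψ - ∑ v, A u v)
    (B := fun u v ↦ (if c u = c v then A u v else 0) / 2 - A u v) (fun U ↦ ?_) ha
  · simp only [sub_mul, Finset.sum_sub_distrib, ← Finset.mul_sum, sub_le_iff_le_add] at superlevel
    refine superlevel.trans_eq ?_
    simp only [Finset.sum_mul, ← Finset.sum_sub_distrib, ← Finset.sum_add_distrib]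
    refine Finset.sum_congr rfl fun u _ ↦ Finset.sum_congr rfl fun v _ ↦ ?_
    split_ifs <;> ring
  · have cut : ∑ u ∈ U, ∑ v ∈ Uᶜ, A u v = ∑ u ∈ U, ∑ v, A u v - ∑ u ∈ U, ∑ v ∈ U, A u v := by
      simp only [← Finset.sum_add_sum_compl U, Finset.sum_add_distrib, add_sub_cancel_left]
    have hU := h U
    simp only [bipartitionDefect, cut] at hU
    simp only [Finset.sum_sub_distrib, ← Finset.sum_div, Finset.sum_const, nsmul_eq_mul]
    linarith

theorem sq_add_sq_sub_two_mul_min_le (x y : ℝ) :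
    x ^ 2 + y ^ 2 - 2 * min (x ^ 2) (y ^ 2) ≤ |x + y| * (|x| + |y|) :=
  calc x ^ 2 + y ^ 2 - 2 * min (x ^ 2) (y ^ 2)
      = max (x ^ 2) (y ^ 2) - min (x ^ 2) (y ^ 2) := by
        linarith [min_add_max (x ^ 2) (y ^ 2)]
    _ = |x + y| * |x - y| := by rw [max_sub_min_eq_abs', sq_sub_sq, abs_mul]
    _ ≤ |x + y| * (|x| + |y|) := by gcongr; exact abs_sub x y

theorem sq_add_sq_sub_min_le {x y : ℝ} (hxy : 0 ≤ x * y) :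
    x ^ 2 + y ^ 2 - min (x ^ 2) (y ^ 2) ≤ |x + y| * (|x| + |y|) :=
  calc x ^ 2 + y ^ 2 - min (x ^ 2) (y ^ 2)
      ≤ (x + y) ^ 2 := by linarith [le_min (sq_nonneg x) (sq_nonneg y), add_sq x y]
    _ = |x + y| * |x + y| := by rw [abs_mul_abs_self, sq]
    _ ≤ |x + y| * (|x| + |y|) := by gcongr; exact abs_add_le x y

theorem ite_min_add_sq_add_sq_sub_le (x y : ℝ) :
    (if decide (0 ≤ x) = decide (0 ≤ y) then min (x ^ 2) (y ^ 2) else 0)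
      + x ^ 2 + y ^ 2 - 2 * min (x ^ 2) (y ^ 2) ≤ |x + y| * (|x| + |y|) := by
  split_ifs with h
  · have hxy : 0 ≤ x * y := by
      rw [decide_eq_decide] at h
      rcases le_or_gt 0 x with hx | hx
      · exact mul_nonneg hx (h.1 hx)
      · exact mul_nonneg_of_nonpos_of_nonpos hx.le (not_le.1 (h.not.1 hx.not_ge)).le
    linarith [sq_add_sq_sub_min_le hxy]
  · simpa only [zero_add] using sq_add_sq_sub_two_mul_min_le x y

theorem sum_sum_mul_swap_of_isSymm (hsymm : A.IsSymm) (f : α → α → ℝ) :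
    ∑ u, ∑ v, A u v * f v u = ∑ u, ∑ v, A u v * f u v := by
  rw [Finset.sum_comm]
  simp only [hsymm.apply]

theorem two_mul_mul_sum_sq_le_sum_abs_add_mul [DecidableEq α] (hA : ∀ u v, 0 ≤ A u v)
    (hsymm : A.IsSymm)
    (h : ∀ (c : α → Bool) (U : Finset α), Ψ * U.card ≤ bipartitionDefect A c U) (x : α → ℝ) :
    2 * (Ψ * ∑ u, x u ^ 2) ≤ ∑ u, ∑ v, A u v * (|x u + x v| * (|x u| + |x v|)) := by
  let f (u v : α) : ℝ :=
    (if decide (0 ≤ x u) = decide (0 ≤ x v) then min (x u ^ 2) (x v ^ 2) else 0) / 2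
      + (x u ^ 2 - min (x u ^ 2) (x v ^ 2))
  have coarea : Ψ * ∑ u, x u ^ 2 ≤ ∑ u, ∑ v, A u v * f u v :=
    mul_sum_le_of_mul_card_le_bipartitionDefect (h fun u ↦ decide (0 ≤ x u))
      fun u ↦ sq_nonneg (x u)
  calc 2 * (Ψ * ∑ u, x u ^ 2)
      ≤ ∑ u, ∑ v, A u v * f u v + ∑ u, ∑ v, A u v * f v u := by
        rw [sum_sum_mul_swap_of_isSymm hsymm f]
        linarith
    _ = ∑ u, ∑ v, A u v * (f u v + f v u) := by simp only [mul_add, Finset.sum_add_distrib]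
    _ ≤ ∑ u, ∑ v, A u v * (|x u + x v| * (|x u| + |x v|)) := by
        gcongr with u _ v _
        · exact hA u v
        · refine le_of_eq_of_le ?_ (ite_min_add_sq_add_sq_sub_le (x u) (x v))
          simp only [f, eq_comm (a := decide (0 ≤ x v)), min_comm (x v ^ 2)]
          ring

theorem sum_sum_mul_sq_add_sq_le (hsymm : A.IsSymm) (hD : ∀ u, ∑ v, A u v ≤ D) (x : α → ℝ) :
    ∑ u, ∑ v, A u v * (x u ^ 2 + x v ^ 2) ≤ 2 * D * ∑ u, x u ^ 2 :=
  calc ∑ u, ∑ v, A u v * (x u ^ 2 + x v ^ 2)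
      = 2 * ∑ u, (∑ v, A u v) * x u ^ 2 := by
        simp only [mul_add, Finset.sum_add_distrib]
        rw [sum_sum_mul_swap_of_isSymm hsymm fun u _ ↦ x u ^ 2, ← two_mul]
        simp only [Finset.sum_mul]
    _ ≤ 2 * ∑ u, D * x u ^ 2 := by gcongr with u; exact hD u
    _ = 2 * D * ∑ u, x u ^ 2 := by rw [← Finset.mul_sum, mul_assoc]

theorem sum_sum_mul_abs_add_abs_sq_le (hA : ∀ u v, 0 ≤ A u v) (hsymm : A.IsSymm)
    (hD : ∀ u, ∑ v, A u v ≤ D) (x : α → ℝ) :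
    ∑ u, ∑ v, A u v * (|x u| + |x v|) ^ 2 ≤ 4 * (D * ∑ u, x u ^ 2) :=
  calc ∑ u, ∑ v, A u v * (|x u| + |x v|) ^ 2
      ≤ ∑ u, ∑ v, A u v * (2 * (|x u| ^ 2 + |x v| ^ 2)) := by
        gcongr with u _ v _
        · exact hA u v
        · exact add_sq_le
    _ = 2 * ∑ u, ∑ v, A u v * (x u ^ 2 + x v ^ 2) := by
        simp only [sq_abs, Finset.mul_sum, mul_left_comm (2 : ℝ)]
    _ ≤ 4 * (D * ∑ u, x u ^ 2) := by linarith [sum_sum_mul_sq_add_sq_le hsymm hD x]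

theorem sum_sum_mul_abs_mul_sq_le (hA : ∀ u v, 0 ≤ A u v) (f g : α → α → ℝ) :
    (∑ u, ∑ v, A u v * (|f u v| * g u v)) ^ 2 ≤
      (∑ u, ∑ v, A u v * f u v ^ 2) * ∑ u, ∑ v, A u v * g u v ^ 2 := by
  simp only [← Fintype.sum_prod_type']
  refine Finset.sum_sq_le_sum_mul_sum_of_sq_le_mul _
    (fun q _ ↦ mul_nonneg (hA _ _) (sq_nonneg _)) (fun q _ ↦ mul_nonneg (hA _ _) (sq_nonneg _))
    fun q _ ↦ le_of_eq ?_
  rw [← sq_abs (f q.1 q.2)]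
  ring

theorem sq_mul_sum_sq_le_of_mul_card_le_bipartitionDefect [DecidableEq α]
    (hA : ∀ u v, 0 ≤ A u v) (hsymm : A.IsSymm) (hΨ : 0 ≤ Ψ)
    (h : ∀ (c : α → Bool) (U : Finset α), Ψ * U.card ≤ bipartitionDefect A c U)
    (hD : ∀ u, ∑ v, A u v ≤ D) (x : α → ℝ) :
    (Ψ * ∑ u, x u ^ 2) ^ 2 ≤ (∑ u, ∑ v, A u v * (x u + x v) ^ 2) * (D * ∑ u, x u ^ 2) := by
  have form_nonneg : 0 ≤ ∑ u, ∑ v, A u v * (x u + x v) ^ 2 :=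
    Finset.sum_nonneg fun u _ ↦ Finset.sum_nonneg fun v _ ↦ mul_nonneg (hA u v) (sq_nonneg _)
  suffices (2 * (Ψ * ∑ u, x u ^ 2)) ^ 2 ≤
      (∑ u, ∑ v, A u v * (x u + x v) ^ 2) * (4 * (D * ∑ u, x u ^ 2)) by linarith
  calc (2 * (Ψ * ∑ u, x u ^ 2)) ^ 2
      ≤ (∑ u, ∑ v, A u v * (|x u + x v| * (|x u| + |x v|))) ^ 2 := by
        gcongr
        exact two_mul_mul_sum_sq_le_sum_abs_add_mul hA hsymm h x
    _ ≤ (∑ u, ∑ v, A u v * (x u + x v) ^ 2) * ∑ u, ∑ v, A u v * (|x u| + |x v|) ^ 2 :=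
        sum_sum_mul_abs_mul_sq_le hA (fun u v ↦ x u + x v) fun u v ↦ |x u| + |x v|
    _ ≤ (∑ u, ∑ v, A u v * (x u + x v) ^ 2) * (4 * (D * ∑ u, x u ^ 2)) := by
        gcongr
        exact sum_sum_mul_abs_add_abs_sq_le hA hsymm hD x

theorem sum_sum_mul_add_sq_le_of_mulVec_eq_smul (hsymm : A.IsSymm) (hD : ∀ u, ∑ v, A u v ≤ D)
    (hx : A.mulVec x = l • x) :
    ∑ u, ∑ v, A u v * (x u + x v) ^ 2 ≤ 2 * (D + l) * ∑ u, x u ^ 2 := by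
  have form : ∑ u, ∑ v, A u v * (x u * x v) = l * ∑ u, x u ^ 2 :=
    calc ∑ u, ∑ v, A u v * (x u * x v)
        = ∑ u, x u * (A.mulVec x) u := by
          simp only [Matrix.mulVec, dotProduct, Finset.mul_sum, mul_left_comm]
      _ = l * ∑ u, x u ^ 2 := by
          simp only [hx, Pi.smul_apply, smul_eq_mul, Finset.mul_sum, sq, mul_left_comm]
  calc ∑ u, ∑ v, A u v * (x u + x v) ^ 2
      = ∑ u, ∑ v, A u v * (x u ^ 2 + x v ^ 2) + 2 * ∑ u, ∑ v, A u v * (x u * x v) := by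
        simp only [Finset.mul_sum, ← Finset.sum_add_distrib]
        refine Finset.sum_congr rfl fun u _ ↦ Finset.sum_congr rfl fun v _ ↦ ?_
        ring
    _ ≤ 2 * (D + l) * ∑ u, x u ^ 2 := by linarith [sum_sum_mul_sq_add_sq_le hsymm hD x]

theorem sq_le_mul_of_mulVec_eq_smul [DecidableEq α] (hA : ∀ u v, 0 ≤ A u v) (hsymm : A.IsSymm)
    (hΨ : 0 ≤ Ψ) (h : ∀ (c : α → Bool) (U : Finset α), Ψ * U.card ≤ bipartitionDefect A c U)
    (hD : ∀ u, ∑ v, A u v ≤ D) (hx₀ : x ≠ 0) (hx : A.mulVec x = l • x) :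
    Ψ ^ 2 ≤ (D + l) * (2 * D) := by
  obtain ⟨u, hu⟩ := Function.ne_iff.1 hx₀
  have D_nonneg : 0 ≤ D := (Finset.sum_nonneg fun v _ ↦ hA u v).trans (hD u)
  have norm_pos : 0 < ∑ u, x u ^ 2 :=
    Finset.sum_pos' (fun v _ ↦ sq_nonneg (x v)) ⟨u, Finset.mem_univ u, sq_pos_of_ne_zero hu⟩
  refine le_of_mul_le_mul_right ?_ (pow_pos norm_pos 2)
  calc Ψ ^ 2 * (∑ u, x u ^ 2) ^ 2
      = (Ψ * ∑ u, x u ^ 2) ^ 2 := (mul_pow _ _ _).symm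
    _ ≤ (∑ u, ∑ v, A u v * (x u + x v) ^ 2) * (D * ∑ u, x u ^ 2) :=
        sq_mul_sum_sq_le_of_mul_card_le_bipartitionDefect hA hsymm hΨ h hD x
    _ ≤ 2 * (D + l) * (∑ u, x u ^ 2) * (D * ∑ u, x u ^ 2) := by
        gcongr
        exact sum_sum_mul_add_sq_le_of_mulVec_eq_smul hsymm hD hx
    _ = (D + l) * (2 * D) * (∑ u, x u ^ 2) ^ 2 := by ring

end Weighted

section Graph

variable {α β : Type*}

theorem bipartiteAfter_ncard_edgeSet_sdiff_comap (H : SimpleGraph β) (c : β → Bool) :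
    bipartiteAfter H (H \ (⊤ : SimpleGraph Bool).comap c).edgeSet.ncard := by
  refine ⟨_, SimpleGraph.edgeSet_subset_edgeSet.2 sdiff_le, rfl, ?_⟩
  have proper : H.deleteEdges (H \ (⊤ : SimpleGraph Bool).comap c).edgeSet ≤
      (⊤ : SimpleGraph Bool).comap c := by
    rw [SimpleGraph.deleteEdges_edgeSet, sdiff_sdiff_right_self]
    exact inf_le_right
  simpa only [Fintype.card_bool] using
    (SimpleGraph.Coloring.mk c fun huv ↦ proper huv).colorable

variable [Fintype α]

theorem adjMat_eq_adjMatrix (G : SimpleGraph α) [DecidableRel G.Adj] :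
    adjMat G = G.adjMatrix ℝ := by
  ext u v
  simp [adjMat, SimpleGraph.adjMatrix_apply]

theorem adjMat_nonneg (G : SimpleGraph α) (u v : α) : 0 ≤ adjMat G u v := by
  unfold adjMat
  positivity

theorem sum_adjMat_eq_ncard_neighborSet (G : SimpleGraph α) (u : α) :
    ∑ v, adjMat G u v = (G.neighborSet u).ncard := by
  classical
  rw [adjMat_eq_adjMatrix, Set.ncard_eq_toFinset_card', ← SimpleGraph.neighborFinset]
  simp [SimpleGraph.adjMatrix_apply, SimpleGraph.neighborFinset_eq_filter]

theorem sum_sum_adjMat_eq_two_mul_ncard_edgeSet (G : SimpleGraph α) :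
    ∑ u, ∑ v, adjMat G u v = 2 * (G.edgeSet.ncard : ℝ) := by
  classical
  simp only [sum_adjMat_eq_ncard_neighborSet, Set.ncard_eq_toFinset_card']
  exact_mod_cast G.sum_degrees_eq_twice_card_edges

theorem cutCount_eq_sum_adjMat [DecidableEq α] (G : SimpleGraph α) (U : Finset α) :
    (cutCount G U : ℝ) = ∑ u ∈ U, ∑ v ∈ Uᶜ, adjMat G u v := by
  simp only [cutCount, adjMat, Nat.cast_sum, Nat.cast_ite, Nat.cast_one, Nat.cast_zero]

theorem adjMat_sdiff_comap (H : SimpleGraph α) (c : α → Bool) (u v : α) :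
    adjMat (H \ (⊤ : SimpleGraph Bool).comap c) u v = if c u = c v then adjMat H u v else 0 := by
  unfold adjMat
  split_ifs <;> simp_all

theorem two_mul_le_sum_adjMat_of_mem_lowerBounds {H : SimpleGraph α} {k : ℕ}
    (hk : k ∈ lowerBounds {k : ℕ | bipartiteAfter H k}) (c : α → Bool) :
    2 * (k : ℝ) ≤ ∑ u, ∑ v, if c u = c v then adjMat H u v else 0 := by
  have hkc : k ≤ (H \ (⊤ : SimpleGraph Bool).comap c).edgeSet.ncard :=
    hk (bipartiteAfter_ncard_edgeSet_sdiff_comap H c)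
  simp only [← adjMat_sdiff_comap, sum_sum_adjMat_eq_two_mul_ncard_edgeSet]
  gcongr

theorem add_cutCount_le_bipartitionDefect [DecidableEq α] {G : SimpleGraph α} {U : Finset α}
    {k : ℕ} (hk : k ∈ lowerBounds {k : ℕ | bipartiteAfter (G.induce (↑U : Set α)) k})
    (c : α → Bool) : (k : ℝ) + cutCount G U ≤ bipartitionDefect (adjMat G) c U := by
  have mono : 2 * (k : ℝ) ≤ ∑ u ∈ U, ∑ v ∈ U, if c u = c v then adjMat G u v else 0 := by
    refine (two_mul_le_sum_adjMat_of_mem_lowerBounds hk fun u ↦ c u).trans_eq ?_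
    rw [← Finset.sum_coe_sort U]
    exact Finset.sum_congr rfl fun u _ ↦
      Finset.sum_coe_sort U fun v ↦ if c u = c v then adjMat G u v else 0
  rw [bipartitionDefect, cutCount_eq_sum_adjMat]
  linarith

end Graph

theorem desai_roy_general {α : Type*} [Fintype α] [DecidableEq α]
    (G : SimpleGraph α) (D : ℕ) (hD : 1 ≤ D)
    (hdeg : ∀ x : α, (G.neighborSet x).ncard ≤ D)
    (b : Finset α → ℕ)
    (hb : ∀ U : Finset α, IsLeast {k : ℕ | bipartiteAfter (G.induce (↑U : Set α)) k} (b U))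
    (Ψ : ℝ)
    (hΨ : IsLeast {r : ℝ | ∃ U : Finset α, U.Nonempty ∧
            r = ((b U : ℝ) + cutCount G U) / U.card} Ψ) (i : α) :
    -(D : ℝ) + Ψ ^ 2 / (2 * D) ≤ (adjMat_isHermitian G).eigenvalues i := by
  have hΨ₀ : 0 ≤ Ψ := by
    obtain ⟨U, -, rfl⟩ := hΨ.1
    positivity
  have defect (c : α → Bool) (U : Finset α) : Ψ * U.card ≤ bipartitionDefect (adjMat G) c U := by
    rcases U.eq_empty_or_nonempty with rfl | hU
    · simp [bipartitionDefect]
    · have ratio := hΨ.2 ⟨U, hU, rfl⟩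
      rw [le_div_iff₀ (by exact_mod_cast hU.card_pos)] at ratio
      exact ratio.trans (add_cutCount_le_bipartitionDefect (hb U).2 c)
  have row_sum (u : α) : ∑ v, adjMat G u v ≤ D := by
    rw [sum_adjMat_eq_ncard_neighborSet]
    exact_mod_cast hdeg u
  have eigenvector_ne_zero : ((adjMat_isHermitian G).eigenvectorBasis i).ofLp ≠ 0 := by
    simpa using (adjMat_isHermitian G).eigenvectorBasis.toBasis.ne_zero i
  have bound := sq_le_mul_of_mulVec_eq_smul (adjMat_nonneg G)
    (Matrix.isHermitian_iff_isSymm.1 (adjMat_isHermitian G)) hΨ₀ defect row_sum eigenvector_ne_zero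
    ((adjMat_isHermitian G).mulVec_eigenvectorBasis i)
  rw [neg_add_le_iff_le_add, div_le_iff₀ (by positivity)]
  exact bound

theorem desai_roy {α : Type*} [Fintype α] [DecidableEq α]
    (G : SimpleGraph α) (D : ℕ) (hD : 1 ≤ D) (hN : 0 < Fintype.card α)
    (hreg : ∀ x : α, (G.neighborSet x).ncard = D)
    (μ : Fin (Fintype.card α) → ℝ) (hmono : Antitone μ)
    (e : Fin (Fintype.card α) ≃ α)
    (heig : ∀ i, μ i = (adjMat_isHermitian G).eigenvalues (e i))
    (b : Finset α → ℕ)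
    (hb : ∀ U : Finset α, IsLeast {k : ℕ | bipartiteAfter (G.induce (↑U : Set α)) k} (b U))
    (Ψ : ℝ)
    (hΨ : IsLeast {r : ℝ | ∃ U : Finset α, U.Nonempty ∧
            r = ((b U : ℝ) + cutCount G U) / U.card} Ψ) :
    -(D : ℝ) + Ψ ^ 2 / (4 * D) ≤ μ ⟨Fintype.card α - 1, by omega⟩ := by
  rw [heig]
  exact le_trans (by gcongr; norm_num)
    (desai_roy_general G D hD (fun x ↦ (hreg x).le) b hb Ψ hΨ _)
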